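/- The metric space (X̂, d̂) is compact if and only if (X, d) is proper, i.e. every closed bounded subset of X is compact. -/

import Mathlib

open Metric Set MeasureTheory Filter
open scoped ENNReal NNReal

noncomputable section

variable {X : Type*}

/-- The quasimetric `d_a` on the sphericalization `X̂ = X ∪ {∞}`, with `none` playing
the role of the point `∞`. -/
noncomputable def sphDist [MetricSpace X] (a : X) : Option X → Option X → ℝ
  | some x, some y => dist x y / ((1 + dist x a) * (1 + dist y a))
  | some x, none => 1 / (1 + dist x a)
  | none, some y => 1 / (1 + dist y a)
  | none, none => 0

/-- The sum `Σ_{j=1}^k d_a(x_{j-1}, x_j)` along a finite sequence (list) in `X̂`. -/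
noncomputable def chainSum [MetricSpace X] (a : X) : List (Option X) → ℝ
  | [] => 0
  | [_] => 0
  | x :: y :: l => sphDist a x y + chainSum a (y :: l)

/-- The sphericalized distance `d̂(x,y) = inf Σ_{j=1}^k d_a(x_{j-1},x_j)`, the infimum
being taken over all finite sequences `x = x_0, x_1, …, x_k = y` in `X̂`. -/
noncomputable def sphHatDist [MetricSpace X] (a : X) (x y : Option X) : ℝ :=
  sInf {s : ℝ | ∃ L : List (Option X),
    L.head? = some x ∧ L.getLast? = some y ∧ chainSum a L = s}

/-- `d̂(x) = d̂(x,∞) = 1/(1+|x|)` for `x ∈ X`. -/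
noncomputable def sphD [MetricSpace X] (a x : X) : ℝ := 1 / (1 + dist x a)

theorem sphDist_nonneg [MetricSpace X] (a : X) (x y : Option X) : 0 ≤ sphDist a x y := by
  rcases x with _ | x <;> rcases y with _ | y <;> simp only [sphDist] <;> positivity

theorem chainSum_nonneg [MetricSpace X] (a : X) (L : List (Option X)) : 0 ≤ chainSum a L := by
  induction L with
  | nil => simp [chainSum]
  | cons x l ih =>
    cases l with
    | nil => simp [chainSum]
    | cons y l => exact add_nonneg (sphDist_nonneg a x y) ih

theorem sphHatDist_nonneg [MetricSpace X] (a : X) (x y : Option X) :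
    0 ≤ sphHatDist a x y := by
  refine Real.sInf_nonneg ?_
  rintro s ⟨L, -, -, rfl⟩
  exact chainSum_nonneg a L

theorem sphHatDist_le_sphDist [MetricSpace X] (a : X) (x y : Option X) :
    sphHatDist a x y ≤ sphDist a x y := by
  refine csInf_le ⟨0, ?_⟩ ⟨[x, y], by simp, by simp, by simp [chainSum]⟩
  rintro s ⟨L, -, -, rfl⟩
  exact chainSum_nonneg a L

/-- A function that is `C`-Lipschitz for `d_a` is `C`-Lipschitz along chains. -/
theorem sub_le_mul_chainSum [MetricSpace X] {a : X} {C : ℝ} {g : Option X → ℝ}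
    (hg : ∀ x y, g x - g y ≤ C * sphDist a x y) (L : List (Option X)) :
    ∀ x y, L.head? = some x → L.getLast? = some y → g x - g y ≤ C * chainSum a L := by
  induction L with
  | nil => simp
  | cons w l ih =>
    intro x y hx hy
    obtain rfl : w = x := by simpa using hx
    cases l with
    | nil =>
      obtain rfl : w = y := by simpa using hy
      simp [chainSum]
    | cons v l =>
      have h := ih v y (by simp) (by simpa using hy)
      have := hg w v
      simp only [chainSum]
      linarith

/-- A function that is `C`-Lipschitz for `d_a` is `C`-Lipschitz for `d̂`. -/
theorem sub_le_mul_sphHatDist [MetricSpace X] {a : X} {C : ℝ} (hC : 0 < C)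
    {g : Option X → ℝ} (hg : ∀ x y, g x - g y ≤ C * sphDist a x y) (x y : Option X) :
    g x - g y ≤ C * sphHatDist a x y := by
  rw [← div_le_iff₀' hC]
  refine le_csInf ⟨_, [x, y], by simp, by simp, rfl⟩ ?_
  rintro s ⟨L, hx, hy, rfl⟩
  rw [div_le_iff₀' hC]
  exact sub_le_mul_chainSum hg L x y hx hy

theorem sphDist_none_sub_le [MetricSpace X] (a : X) (x y : Option X) :
    sphDist a x none - sphDist a y none ≤ 1 * sphDist a x y := by
  rcases x with _ | x <;> rcases y with _ | y <;> simp only [sphDist]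
  · simp
  · have : 0 ≤ 1 / (1 + dist y a) := by positivity
    linarith
  · simp
  · have hx : 0 < 1 + dist x a := by positivity
    have hy : 0 < 1 + dist y a := by positivity
    rw [div_sub_div _ _ hx.ne' hy.ne', one_mul (_ / _)]
    gcongr
    have := dist_triangle y x a
    rw [dist_comm y x] at this
    linarith

/-- The distance to `z` truncated at `1`, extended by `1` at `∞`. -/
def truncDist [MetricSpace X] (z : X) : Option X → ℝ
  | some x => min (dist x z) 1
  | none => 1

theorem min_dist_one_le [MetricSpace X] (a z x y : X) (hx : dist x z ≤ 1) :
    min (dist x y) 1 ≤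
      (2 + dist z a) * (3 + dist z a) * (dist x y / ((1 + dist x a) * (1 + dist y a))) := by
  have hxa : 1 + dist x a ≤ 2 + dist z a := by linarith [dist_triangle x z a]
  have hya : 1 + dist y a ≤ 2 + dist z a + dist x y := by
    have := dist_triangle y x a
    rw [dist_comm y x] at this
    linarith
  have hd : 0 ≤ dist x y := dist_nonneg
  have hz : 0 ≤ dist z a := dist_nonneg
  have key : min (dist x y) 1 * (1 + dist y a) ≤ (3 + dist z a) * dist x y := by
    rcases le_total (dist x y) 1 with h | h
    · rw [min_eq_left h]
      nlinarith
    · rw [min_eq_right h]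
      nlinarith
  rw [← mul_div_assoc, le_div_iff₀ (by positivity)]
  calc min (dist x y) 1 * ((1 + dist x a) * (1 + dist y a))
      = (1 + dist x a) * (min (dist x y) 1 * (1 + dist y a)) := by ring
    _ ≤ (2 + dist z a) * ((3 + dist z a) * dist x y) := by gcongr
    _ = _ := by ring

theorem truncDist_sub_le [MetricSpace X] (a z : X) (x y : Option X) :
    truncDist z x - truncDist z y ≤ (2 + dist z a) * (3 + dist z a) * sphDist a x y := by
  have hz : 0 ≤ dist z a := dist_nonneg
  have hC : 0 ≤ (2 + dist z a) * (3 + dist z a) := by positivity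
  have hle : truncDist z x ≤ 1 := by
    cases x <;> simp [truncDist]
  rcases y with _ | y
  · have := mul_nonneg hC (sphDist_nonneg a x none)
    simp only [truncDist] at *
    linarith
  · rcases le_total 1 (dist y z) with hy | hy
    · have := mul_nonneg hC (sphDist_nonneg a x (some y))
      simp only [truncDist, min_eq_right hy] at *
      linarith
    · rcases x with _ | x
      · have hya : 1 + dist y a ≤ 2 + dist z a := by linarith [dist_triangle y z a]
        have h1 : 1 ≤ (2 + dist z a) * (3 + dist z a) * (1 / (1 + dist y a)) := by
          rw [mul_one_div, one_le_div (by positivity)]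
          nlinarith
        have h2 : 0 ≤ min (dist y z) 1 := by positivity
        simp only [truncDist, sphDist]
        linarith
      · have h := min_dist_one_le a z y x hy
        rw [dist_comm y x, mul_comm (1 + dist y a)] at h
        refine le_trans ?_ h
        simp only [truncDist, min_eq_left hy]
        have := dist_triangle x y z
        refine le_min ?_ ?_
        · linarith [min_le_left (dist x z) 1]
        · linarith [min_le_right (dist x z) 1, dist_nonneg (x := y) (y := z)]

/-- Convergence in `d̂` to a point of `X` implies convergence in `X`. -/
theorem tendsto_of_tendsto_sphHatDist [MetricSpace X] (a : X) {v : ℕ → X} {z : X}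
    (h : Tendsto (fun n => sphHatDist a (some (v n)) (some z)) atTop (nhds 0)) :
    Tendsto v atTop (nhds z) := by
  have hC : 0 < (2 + dist z a) * (3 + dist z a) := by positivity
  have hmin : Tendsto (fun n => min (dist (v n) z) 1) atTop (nhds 0) := by
    refine squeeze_zero (fun n => by positivity) (fun n => ?_)
      (by simpa using h.const_mul ((2 + dist z a) * (3 + dist z a)))
    simpa [truncDist] using
      sub_le_mul_sphHatDist hC (truncDist_sub_le a z) (some (v n)) (some z)
  rw [tendsto_iff_dist_tendsto_zero]
  refine hmin.congr' ?_
  filter_upwards [hmin.eventually_lt_const one_pos] with n hn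
  exact min_eq_left ((min_lt_iff.1 hn).resolve_right (lt_irrefl _)).le

theorem sphDist_some_le_dist [MetricSpace X] (a x y : X) :
    sphDist a (some x) (some y) ≤ dist x y := by
  refine div_le_self dist_nonneg (one_le_mul_of_one_le_of_one_le ?_ ?_) <;> simp

theorem properSpace_of_sphHatDist_seqCompact [MetricSpace X] (a : X)
    (h : ∀ u : ℕ → Option X, ∃ (z : Option X) (φ : ℕ → ℕ), StrictMono φ ∧
      Tendsto (fun n => sphHatDist a (u (φ n)) z) atTop (nhds 0)) :
    ProperSpace X := by
  refine ⟨fun x r => IsSeqCompact.isCompact fun v hv => ?_⟩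
  obtain ⟨z, φ, hφ, hlim⟩ := h fun n => some (v n)
  rcases z with _ | z
  · have hr : 0 ≤ r := dist_nonneg.trans (hv 0)
    have hpos : 0 < 1 / (1 + (r + dist x a)) := by positivity
    obtain ⟨n, hn⟩ := (hlim.eventually_lt_const hpos).exists
    have hlow := sub_le_mul_sphHatDist one_pos (sphDist_none_sub_le a) (some (v (φ n))) none
    have hb : 1 / (1 + (r + dist x a)) ≤ 1 / (1 + dist (v (φ n)) a) := by
      gcongr
      have : dist (v (φ n)) x ≤ r := hv (φ n)
      linarith [dist_triangle (v (φ n)) x a]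
    simp only [sphDist] at hlow
    linarith
  · have ht := tendsto_of_tendsto_sphHatDist a hlim
    exact ⟨z, isClosed_closedBall.mem_of_tendsto ht (Eventually.of_forall fun n => hv (φ n)),
      φ, hφ, ht⟩

theorem sphHatDist_seqCompact [MetricSpace X] [ProperSpace X] (a : X) (u : ℕ → Option X) :
    ∃ (z : Option X) (φ : ℕ → ℕ), StrictMono φ ∧
      Tendsto (fun n => sphHatDist a (u (φ n)) z) atTop (nhds 0) := by
  by_cases hu : ∀ ε > 0, ∀ᶠ n in atTop, sphDist a (u n) none < ε
  · refine ⟨none, id, strictMono_id, squeeze_zero (fun n => sphHatDist_nonneg _ _ _)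
      (fun n => sphHatDist_le_sphDist _ _ _) ?_⟩
    refine tendsto_order.2 ⟨fun b hb => ?_, hu⟩
    exact Eventually.of_forall fun n => hb.trans_le (sphDist_nonneg _ _ _)
  · push Not at hu
    obtain ⟨ε, hε, hfreq⟩ := hu
    obtain ⟨ψ, hψ, hψε⟩ := extraction_of_frequently_atTop hfreq
    have hsome : ∀ n, ∃ x ∈ closedBall a (1 / ε), u (ψ n) = some x := by
      intro n
      have h := hψε n
      rcases hun : u (ψ n) with _ | x
      · rw [hun] at h
        exact absurd h (not_le.2 hε)
      · rw [hun] at h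
        refine ⟨x, ?_, rfl⟩
        have hx : 1 + dist x a ≤ 1 / ε := (le_one_div hε (by positivity)).1 h
        rw [mem_closedBall]
        linarith
    choose v hv hvu using hsome
    obtain ⟨z, -, φ, hφ, hlim⟩ := (isCompact_closedBall a (1 / ε)).tendsto_subseq hv
    refine ⟨some z, ψ ∘ φ, hψ.comp hφ, squeeze_zero (fun n => sphHatDist_nonneg _ _ _)
      (fun n => ?_) (tendsto_iff_dist_tendsto_zero.1 hlim)⟩
    simp only [Function.comp_apply, hvu]
    exact (sphHatDist_le_sphDist _ _ _).trans (sphDist_some_le_dist _ _ _)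

/-- The metric space `(X̂, d̂)` is compact (expressed here by the
equivalent sequential compactness with respect to the metric `d̂`) if and only if
`(X, d)` is proper, i.e. every closed bounded subset of `X` is compact. -/
theorem statement5 [MetricSpace X]
    (hX : ¬ Bornology.IsBounded (Set.univ : Set X)) (a : X) :
    (∀ u : ℕ → Option X, ∃ (z : Option X) (φ : ℕ → ℕ), StrictMono φ ∧
        Filter.Tendsto (fun n => sphHatDist a (u (φ n)) z) Filter.atTop (nhds 0)) ↔
      ProperSpace X := by
  exact ⟨properSpace_of_sphHatDist_seqCompact a, fun _ => sphHatDist_seqCompact a⟩
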